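/- Let A be a countably infinite set and let P be a prefix–shift-compatible enumeration of Σ_A^fin. Then the Ott–Tomforde–Willis full shift (Σ_A, σ) with domain D = Σ_A ∖ {∅} has the Lipschitz shadowing property with respect to the OTW metric d_P, with Lipschitz constant L = 2 and δ₀ = 1/4: for every δ ∈ (0, 1/4], every δ-pseudo-orbit (x^n) admits a point x ∈ Σ_A with σ^j(x) ∈ D for all j ≥ 0 and d_P(σ^n(x), x^n) ≤ 2δ for all n ≥ 0. -/

import Mathlib

/-- The Ott–Tomforde–Willis full shift `Σ_A = A^ℕ ⊔ Σ_A^fin`: infinite words are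
functions `ℕ → A`, finite words (including the empty word `[]`) are lists. -/
abbrev OTWFullShift (A : Type*) := (ℕ → A) ⊕ List A

/-- `u ⪯ x`: the finite word `u` is an initial segment of `x ∈ Σ_A`. -/
def OTWPre {A : Type*} (u : List A) : OTWFullShift A → Prop
  | Sum.inl f => ∀ i : Fin u.length, u.get i = f i
  | Sum.inr v => u <+: v

/-- The shift map on `Σ_A`: delete the first symbol (finite words of length `≤ 1`
are sent to the empty word). -/
def otwShift {A : Type*} : OTWFullShift A → OTWFullShift A
  | Sum.inl f => Sum.inl fun n => f (n + 1)
  | Sum.inr v => Sum.inr v.tail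

/-- The Deaconu–Renault domain `D = Σ_A ∖ {∅}`. -/
def otwDomain (A : Type*) : Set (OTWFullShift A) := {x | x ≠ Sum.inr []}

/-- `P` is an enumeration of `Σ_A^fin` indexed by `{1, 2, 3, …}`:
`j ↦ P j` is a bijection from `{1, 2, …}` onto the finite words
(the value `P 0` is irrelevant). -/
def IsEnumeration {A : Type*} (P : ℕ → List A) : Prop :=
  Function.Bijective fun k : ℕ => P (k + 1)

open Classical in
/-- The OTW metric attached to the enumeration `P`:
`d_P(x,y) = 2^{-i}` where `i = min{j ≥ 1 : exactly one of P j ⪯ x, P j ⪯ y}`. -/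
noncomputable def otwDist {A : Type*} (P : ℕ → List A) (x y : OTWFullShift A) : ℝ :=
  if x = y then 0
  else (1 / 2 : ℝ) ^ sInf {j : ℕ | 1 ≤ j ∧ Xor' (OTWPre (P j) x) (OTWPre (P j) y)}

/-- A `δ`-pseudo-orbit for the system `(Σ_A, σ, D)` with respect to `d`. -/
def IsDeltaPseudoOrbit {X : Type*} (d : X → X → ℝ) (σ : X → X) (D : Set X)
    (δ : ℝ) (xs : ℕ → X) : Prop :=
  ∀ n : ℕ, xs n ∈ D ∧ d (σ (xs n)) (xs (n + 1)) < δ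

/-- The shadowing property for the system `(X, σ, D)` with respect to `d`. -/
def HasShadowing {X : Type*} (d : X → X → ℝ) (σ : X → X) (D : Set X) : Prop :=
  ∀ ε > (0:ℝ), ∃ δ > (0:ℝ), ∀ xs : ℕ → X, IsDeltaPseudoOrbit d σ D δ xs →
    ∃ x : X, (∀ j : ℕ, σ^[j] x ∈ D) ∧ ∀ i : ℕ, d (σ^[i] x) (xs i) < ε

/-- The Lipschitz shadowing property for the system `(X, σ, D)` with respect to `d`. -/
def HasLipschitzShadowing {X : Type*} (d : X → X → ℝ) (σ : X → X) (D : Set X) : Prop :=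
  ∃ L > (0:ℝ), ∃ δ₀ > (0:ℝ), ∀ δ : ℝ, 0 < δ → δ ≤ δ₀ →
    ∀ xs : ℕ → X, IsDeltaPseudoOrbit d σ D δ xs →
      ∃ x : X, (∀ j : ℕ, σ^[j] x ∈ D) ∧ ∀ n : ℕ, d (σ^[n] x) (xs n) ≤ L * δ

/-- `P` is a prefix–shift-compatible enumeration: `p_1 = ∅`, every proper prefix
of `p_k` appears earlier, and the shifted word `σ(p_k)` appears earlier whenever
`|p_k| ≥ 2`. -/
def PrefixShiftCompatible {A : Type*} (P : ℕ → List A) : Prop :=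
  P 1 = [] ∧
  (∀ k : ℕ, 1 ≤ k → ∀ u v : List A, P k = u ++ v → v ≠ [] →
    ∃ m : ℕ, 1 ≤ m ∧ m < k ∧ P m = u) ∧
  (∀ k : ℕ, 1 ≤ k → 2 ≤ (P k).length →
    ∃ m : ℕ, 1 ≤ m ∧ m < k ∧ P m = (P k).tail)

/-!
Fix `δ > 0`. Being `δ`-close for `d_P` means having the same initial segments among the words `p_k`
with `δ ≤ 2⁻ᵏ`, and shift compatibility makes this set of words closed under deleting the first
symbol. The shadowing point is the infinite word `a` formed by the first symbols of the `xⁿ`: since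
`bw ⪯ x` holds exactly when `b ⪯ x` and `w ⪯ σ(x)`, induction on the length of a word in that set
shows that `σⁿ(a)` and `xⁿ` have the same initial segments in it.
-/

section InitialSegments

variable {A : Type*}

theorem otwPre_nil (x : OTWFullShift A) : OTWPre [] x := by
  rcases x with f | v
  · exact fun i => i.elim0
  · exact List.nil_prefix

theorem otwPre_cons_iff (b : A) (w : List A) (x : OTWFullShift A) :
    OTWPre (b :: w) x ↔ OTWPre [b] x ∧ OTWPre w (otwShift x) := by
  rcases x with f | _ | ⟨a, v⟩
  · simp [OTWPre, otwShift, Fin.forall_fin_succ]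
  · simp [OTWPre]
  · simp [OTWPre, otwShift, List.cons_prefix_cons]

theorem otwPre_singleton_inl_iff (b : A) (f : ℕ → A) : OTWPre [b] (Sum.inl f) ↔ b = f 0 := by
  simp [OTWPre]

theorem exists_forall_otwPre_singleton_iff_of_mem_otwDomain {x : OTWFullShift A}
    (hx : x ∈ otwDomain A) : ∃ a, ∀ b, OTWPre [b] x ↔ b = a := by
  rcases x with f | _ | ⟨a, v⟩
  · exact ⟨f 0, fun b => otwPre_singleton_inl_iff b f⟩
  · exact absurd rfl hx
  · exact ⟨a, fun b => by simp [OTWPre, List.cons_prefix_cons]⟩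

theorem otwPre_ofFn_inl_iff (f g : ℕ → A) (n : ℕ) :
    OTWPre (List.ofFn fun i : Fin n => f i) (Sum.inl g) ↔ ∀ i < n, f i = g i := by
  simp [OTWPre, Fin.forall_iff]

theorem exists_otwPre_inl_and_not_otwPre_inr (f : ℕ → A) (v : List A) :
    ∃ u, OTWPre u (Sum.inl f) ∧ ¬ OTWPre u (Sum.inr v) := by
  refine ⟨List.ofFn fun i : Fin (v.length + 1) => f i,
    (otwPre_ofFn_inl_iff f f _).2 fun _ _ => rfl, fun hprefix => ?_⟩
  simpa using List.IsPrefix.length_le hprefix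

theorem eq_of_forall_otwPre_iff {x y : OTWFullShift A} (h : ∀ u, OTWPre u x ↔ OTWPre u y) :
    x = y := by
  rcases x with f | v <;> rcases y with g | w
  · congr 1
    funext n
    have hofFn := (h _).1 ((otwPre_ofFn_inl_iff f f (n + 1)).2 fun _ _ => rfl)
    exact (otwPre_ofFn_inl_iff f g (n + 1)).1 hofFn n n.lt_succ_self
  · obtain ⟨u, hf, hw⟩ := exists_otwPre_inl_and_not_otwPre_inr f w
    exact absurd ((h u).1 hf) hw
  · obtain ⟨u, hg, hv⟩ := exists_otwPre_inl_and_not_otwPre_inr g v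
    exact absurd ((h u).2 hg) hv
  · have hvw : v <+: w := (h v).1 List.prefix_rfl
    have hwv : w <+: v := (h w).2 List.prefix_rfl
    exact congrArg Sum.inr (hvw.eq_of_length_le hwv.length_le)

theorem otwShift_iterate_inl (f : ℕ → A) (n : ℕ) :
    otwShift^[n] (Sum.inl f) = Sum.inl fun k => f (k + n) := by
  induction n with
  | zero => rfl
  | succ n ih =>
    rw [Function.iterate_succ_apply', ih]
    simp only [otwShift, Nat.add_right_comm, Nat.add_assoc]

end InitialSegments

section Agreement

variable {A : Type*}

/-- `x` and `y` have the same initial segments among the words of `W`. -/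
def OTWAgreeOn (W : Set (List A)) (x y : OTWFullShift A) : Prop :=
  ∀ u ∈ W, (OTWPre u x ↔ OTWPre u y)

theorem otwAgreeOn_of_forall_otwAgreeOn_otwShift {W : Set (List A)} {x y : ℕ → OTWFullShift A}
    (hW : ∀ u ∈ W, 2 ≤ u.length → u.tail ∈ W)
    (hx : ∀ n, OTWAgreeOn W (otwShift (x n)) (x (n + 1)))
    (hy : ∀ n, OTWAgreeOn W (otwShift (y n)) (y (n + 1)))
    (hfirst : ∀ n b, OTWPre [b] (x n) ↔ OTWPre [b] (y n)) (n : ℕ) :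
    OTWAgreeOn W (x n) (y n) := by
  intro u
  induction u generalizing n with
  | nil => exact fun _ => iff_of_true (otwPre_nil _) (otwPre_nil _)
  | cons b w ih =>
    intro hu
    rcases eq_or_ne w [] with rfl | hw
    · exact hfirst n b
    have hwW : w ∈ W := hW (b :: w) hu (Nat.succ_le_succ (List.length_pos_iff.2 hw))
    have hshift : OTWPre w (otwShift (x n)) ↔ OTWPre w (otwShift (y n)) :=
      calc OTWPre w (otwShift (x n))
        _ ↔ OTWPre w (x (n + 1)) := hx n w hwW
        _ ↔ OTWPre w (y (n + 1)) := ih (n + 1) hwW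
        _ ↔ OTWPre w (otwShift (y n)) := (hy n w hwW).symm
    rw [otwPre_cons_iff b w (x n), otwPre_cons_iff b w (y n)]
    exact and_congr (hfirst n b) hshift

theorem exists_otwAgreeOn_otwShift_iterate {W : Set (List A)} {xs : ℕ → OTWFullShift A}
    (hW : ∀ u ∈ W, 2 ≤ u.length → u.tail ∈ W) (hdom : ∀ n, xs n ∈ otwDomain A)
    (hxs : ∀ n, OTWAgreeOn W (otwShift (xs n)) (xs (n + 1))) :
    ∃ x, (∀ j, otwShift^[j] x ∈ otwDomain A) ∧ ∀ n, OTWAgreeOn W (otwShift^[n] x) (xs n) := by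
  choose a ha using fun n => exists_forall_otwPre_singleton_iff_of_mem_otwDomain (hdom n)
  refine ⟨Sum.inl a, fun j => ?_, otwAgreeOn_of_forall_otwAgreeOn_otwShift hW (fun n => ?_) hxs
    fun n b => ?_⟩
  · rw [otwShift_iterate_inl]
    exact Sum.inl_ne_inr
  · rw [Function.iterate_succ_apply']
    exact fun _ _ => Iff.rfl
  · rw [otwShift_iterate_inl, otwPre_singleton_inl_iff, ha n, Nat.zero_add]

end Agreement

section Metric

variable {A : Type*} {P : ℕ → List A} {δ : ℝ}

/-- The words `p_k` with `δ ≤ 2⁻ᵏ`. For `δ > 0` these finitely many words decide whether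
two points are at `d_P`-distance less than `δ`. -/
def otwTestWords (P : ℕ → List A) (δ : ℝ) : Set (List A) :=
  {u | ∃ k, 1 ≤ k ∧ δ ≤ (1 / 2 : ℝ) ^ k ∧ P k = u}

theorem tail_mem_otwTestWords
    (hshift : ∀ k, 1 ≤ k → 2 ≤ (P k).length → ∃ m, 1 ≤ m ∧ m < k ∧ P m = (P k).tail)
    {u : List A} (hu : u ∈ otwTestWords P δ) (hlen : 2 ≤ u.length) :
    u.tail ∈ otwTestWords P δ := by
  obtain ⟨k, hk, hδk, rfl⟩ := hu
  obtain ⟨m, hm, hmk, htail⟩ := hshift k hk hlen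
  exact ⟨m, hm, hδk.trans (pow_le_pow_of_le_one (by norm_num) (by norm_num) hmk.le), htail⟩

theorem exists_xor_otwPre_of_ne (hP : Function.Surjective fun k => P (k + 1))
    {x y : OTWFullShift A} (hxy : x ≠ y) :
    ∃ j, 1 ≤ j ∧ Xor (OTWPre (P j) x) (OTWPre (P j) y) := by
  contrapose! hxy
  refine eq_of_forall_otwPre_iff fun u => ?_
  obtain ⟨k, rfl⟩ := hP u
  exact (not_xor _ _).1 (hxy (k + 1) k.succ_pos)

theorem otwDist_lt_iff_otwAgreeOn (hP : Function.Surjective fun k => P (k + 1)) (hδ : 0 < δ)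
    (x y : OTWFullShift A) : otwDist P x y < δ ↔ OTWAgreeOn (otwTestWords P δ) x y := by
  rcases eq_or_ne x y with rfl | hxy
  · exact iff_of_true (by simpa only [otwDist, if_true] using hδ) fun _ _ => Iff.rfl
  rw [otwDist, if_neg hxy]
  constructor
  · rintro hlt _ ⟨k, hk, hδk, rfl⟩
    have hk_lt := (pow_lt_pow_iff_right_of_lt_one₀ (by norm_num) (by norm_num)).1
      (hlt.trans_le hδk)
    exact (not_xor _ _).1 fun hxor => Nat.notMem_of_lt_sInf hk_lt ⟨hk, hxor⟩
  · intro hagree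
    obtain ⟨hpos, hxor⟩ := Nat.sInf_mem (exists_xor_otwPre_of_ne hP hxy)
    by_contra! hle
    exact (not_xor _ _).2 (hagree _ ⟨_, hpos, hle, rfl⟩) hxor

end Metric

theorem otw_lipschitz_shadowing_holds_general {A : Type*} {P : ℕ → List A}
    (hP : Function.Surjective fun k => P (k + 1))
    (hshift : ∀ k, 1 ≤ k → 2 ≤ (P k).length → ∃ m, 1 ≤ m ∧ m < k ∧ P m = (P k).tail)
    {δ : ℝ} (hδ : 0 < δ) {xs : ℕ → OTWFullShift A}
    (hxs : IsDeltaPseudoOrbit (otwDist P) otwShift (otwDomain A) δ xs) :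
    ∃ x : OTWFullShift A, (∀ j : ℕ, otwShift^[j] x ∈ otwDomain A) ∧
      ∀ n : ℕ, otwDist P (otwShift^[n] x) (xs n) < δ := by
  simp only [IsDeltaPseudoOrbit, otwDist_lt_iff_otwAgreeOn hP hδ] at hxs ⊢
  exact exists_otwAgreeOn_otwShift_iterate (fun _ => tail_mem_otwTestWords hshift)
    (fun n => (hxs n).1) fun n => (hxs n).2

/-- For a prefix–shift-compatible enumeration `P`, the OTW full shift with
domain `D = Σ_A ∖ {∅}` has the Lipschitz shadowing property with respect to
`d_P`, with Lipschitz constant `L = 2` and threshold `δ₀ = 1/4`. -/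
theorem otw_lipschitz_shadowing_holds {A : Type*} [Countable A] [Infinite A]
    (P : ℕ → List A) (hP : IsEnumeration P) (hpsc : PrefixShiftCompatible P) :
    ∀ δ : ℝ, 0 < δ → δ ≤ 1 / 4 →
      ∀ xs : ℕ → OTWFullShift A, IsDeltaPseudoOrbit (otwDist P) otwShift (otwDomain A) δ xs →
        ∃ x : OTWFullShift A, (∀ j : ℕ, otwShift^[j] x ∈ otwDomain A) ∧
          ∀ n : ℕ, otwDist P (otwShift^[n] x) (xs n) ≤ 2 * δ := by
  intro δ hδ _ xs hxs
  obtain ⟨x, hdom, hclose⟩ := otw_lipschitz_shadowing_holds_general hP.surjective hpsc.2.2 hδ hxs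
  exact ⟨x, hdom, fun n => by linarith [hclose n]⟩
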